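/- (Abelian continuity of the Laplace transform.) Let 0 < a < b < ∞ and let f : ℝ → ℝ be a measurable function that is Lebesgue integrable on [x,y] for all 0 < x ≤ y < ∞, is continuous on (0,a] and on [b,∞), and whose improper integral ∫_0^∞ f(t) dt converges. Then for every r > 0 the improper integral F(r) = ∫_0^∞ e^{−rt} f(t) dt converges, the function F is continuous on (0,∞), and lim_{r→0+} F(r) = ∫_0^∞ f(t) dt. -/

import Mathlib

open Filter Topology MeasureTheory

/-!
Abel's test. Slicing a weight `w ≥ 0` into its superlevel sets, `w t = ∫₀^∞ 1_{s < w t} ds`, and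
exchanging integrals writes `∫ w • f` as a superposition of integrals of `f` over `{s < w}`. If `w`
decreases on `[x, y]`, these sets are initial segments of `[x, y]`, so `‖∫_x^y w • f‖` is at most
`w x` times the largest `‖∫_x^s f‖`. Hence, near both ends of `(0, ∞)`, the Cauchy criterion for
`∫ f` passes to `∫ exp (-r t) • f t dt` uniformly in `r ≥ 0`. The limit is therefore uniform on the
closed half-line `r ≥ 0`, hence continuous there, and its value at `r = 0` is `∫ f`.
-/

section AbelTest

open Set

variable {E : Type*} [NormedAddCommGroup E]

theorem exists_ae_eq_Ioc_of_forall_Ioc_subset {μ : Measure ℝ} [NullSingletonClass μ] {x y : ℝ}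
    {s : Set ℝ} (hxy : x ≤ y) (hs : s ⊆ Ioc x y) (hlower : ∀ t ∈ s, Ioc x t ⊆ s) :
    ∃ z ∈ Icc x y, s =ᵐ[μ] Ioc x z := by
  rcases s.eq_empty_or_nonempty with rfl | hne
  · exact ⟨x, left_mem_Icc.2 hxy, by simp⟩
  have hbdd : BddAbove s := ⟨y, fun t ht => (hs ht).2⟩
  have hle : s ⊆ Ioc x (sSup s) := fun t ht => ⟨(hs ht).1, le_csSup hbdd ht⟩
  have hge : Ioo x (sSup s) ⊆ s := fun t ht =>
    let ⟨u, hu, htu⟩ := exists_lt_of_lt_csSup hne ht.2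
    hlower u hu ⟨ht.1, htu.le⟩
  obtain ⟨t, ht⟩ := hne
  refine ⟨sSup s, ⟨(hle ht).1.le.trans (hle ht).2, csSup_le ⟨t, ht⟩ fun u hu => (hs hu).2⟩, ?_⟩
  exact hle.eventuallyLE.antisymm (Ioo_ae_eq_Ioc.symm.le.trans hge.eventuallyLE)

theorem locallyIntegrableOn_Ioi_of_integrableOn_Icc {μ : Measure ℝ} {f : ℝ → E} {a : ℝ}
    (hf : ∀ x y : ℝ, a < x → x ≤ y → IntegrableOn f (Icc x y) μ) :
    LocallyIntegrableOn f (Ioi a) μ := by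
  intro t ht
  obtain ⟨x, hax, hxt⟩ := exists_between (mem_Ioi.1 ht)
  obtain ⟨y, hty⟩ := exists_gt t
  exact ⟨Icc x y, mem_nhdsWithin_of_mem_nhds (Icc_mem_nhds hxt hty),
    hf x y hax (hxt.trans hty).le⟩

theorem intervalIntegrable_of_locallyIntegrableOn {μ : Measure ℝ} {f : ℝ → E} {I : Set ℝ}
    [I.OrdConnected] {x y : ℝ} (hf : LocallyIntegrableOn f I μ) (hx : x ∈ I) (hy : y ∈ I) :
    IntervalIntegrable f μ x y :=
  (hf.integrableOn_compact_subset (OrdConnected.uIcc_subset ‹_› hx hy)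
    isCompact_uIcc).intervalIntegrable

variable [NormedSpace ℝ E]

theorem tendsto_integral_prod_self_of_tendsto {μ : Measure ℝ} {f : ℝ → E} {I : Set ℝ}
    [I.OrdConnected] {l₁ l₂ : Filter ℝ} [NeBot l₂] {c : E} (hf : LocallyIntegrableOn f I μ)
    (h₁ : I ∈ l₁) (h₂ : I ∈ l₂)
    (hc : Tendsto (fun p : ℝ × ℝ => ∫ t in p.1..p.2, f t ∂μ) (l₁ ×ˢ l₂) (𝓝 c)) :
    Tendsto (fun p : ℝ × ℝ => ∫ t in p.1..p.2, f t ∂μ) (l₁ ×ˢ l₁) (𝓝 0) := by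
  refine Metric.tendsto_nhds.2 fun ε hε => ?_
  have hnear : ∀ᶠ x in l₁, ∀ᶠ z in l₂, dist (∫ t in x..z, f t ∂μ) c < ε / 2 :=
    (Metric.tendsto_nhds.1 hc (ε / 2) (half_pos hε)).curry
  have hnearI := hnear.and h₁
  filter_upwards [hnearI.prod_mk hnearI] with p ⟨⟨hp, hpI⟩, hq, hqI⟩
  obtain ⟨z, hpz, hqz, hz⟩ := (hp.and (hq.and h₂)).exists
  have hsplit : ∫ t in p.1..p.2, f t ∂μ = (∫ t in p.1..z, f t ∂μ) - ∫ t in p.2..z, f t ∂μ :=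
    (sub_eq_of_eq_add (intervalIntegral.integral_add_adjacent_intervals
      (intervalIntegrable_of_locallyIntegrableOn hf hpI hqI)
      (intervalIntegrable_of_locallyIntegrableOn hf hqI hz)).symm).symm
  calc dist (∫ t in p.1..p.2, f t ∂μ) 0
      = dist (∫ t in p.1..z, f t ∂μ) (∫ t in p.2..z, f t ∂μ) := by
        rw [hsplit, dist_zero_right, dist_eq_norm]
    _ ≤ dist (∫ t in p.1..z, f t ∂μ) c + dist (∫ t in p.2..z, f t ∂μ) c :=
        dist_triangle_right _ _ _
    _ < ε := by linarith

theorem tendsto_integral_swap {μ : Measure ℝ} {f : ℝ → E} {l₁ l₂ : Filter ℝ} {c : E}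
    (hc : Tendsto (fun p : ℝ × ℝ => ∫ t in p.1..p.2, f t ∂μ) (l₁ ×ˢ l₂) (𝓝 c)) :
    Tendsto (fun p : ℝ × ℝ => ∫ t in p.1..p.2, f t ∂μ) (l₂ ×ˢ l₁) (𝓝 (-c)) :=
  (hc.comp tendsto_prod_swap).neg.congr fun _ => (intervalIntegral.integral_symm _ _).symm

theorem intervalIntegrable_antitone_smul {μ : Measure ℝ} {w : ℝ → ℝ} {f : ℝ → E} {x y : ℝ}
    (hw : AntitoneOn w (uIcc x y)) (hf : IntervalIntegrable f μ x y) :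
    IntervalIntegrable (fun t => w t • f t) μ x y := by
  rw [intervalIntegrable_iff] at hf ⊢
  refine hf.bdd_smul (max |w (max x y)| |w (min x y)|)
    (aemeasurable_restrict_of_antitoneOn measurableSet_uIoc
      (hw.mono uIoc_subset_uIcc)).aestronglyMeasurable ?_
  filter_upwards [ae_restrict_mem measurableSet_uIoc] with t ht
  have htI : t ∈ Icc (min x y) (max x y) := uIoc_subset_uIcc ht
  exact abs_le_max_abs_abs (hw htI ⟨min_le_max, le_rfl⟩ htI.2) (hw ⟨le_rfl, min_le_max⟩ htI htI.1)

theorem continuousOn_integral_antitone_smul {X : Type*} [TopologicalSpace X]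
    [FirstCountableTopology X] {μ : Measure ℝ} {f : ℝ → E} {w : X → ℝ → ℝ} {S : Set X} {x y : ℝ}
    (hf : IntervalIntegrable f μ x y) (hw : ∀ r ∈ S, AntitoneOn (w r) (uIcc x y))
    (hw01 : ∀ r ∈ S, MapsTo (w r) (uIcc x y) (Icc 0 1))
    (hwc : ∀ t ∈ uIcc x y, ContinuousOn (fun r => w r t) S) :
    ContinuousOn (fun r => ∫ t in x..y, w r t • f t ∂μ) S := by
  intro r hr
  refine intervalIntegral.continuousWithinAt_of_dominated_interval (bound := fun t => ‖f t‖)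
    ?_ ?_ hf.norm ?_
  · filter_upwards [self_mem_nhdsWithin] with r hr
    exact (intervalIntegrable_iff.1
      (intervalIntegrable_antitone_smul (hw r hr) hf)).aestronglyMeasurable
  · filter_upwards [self_mem_nhdsWithin] with r hr
    refine Eventually.of_forall fun t ht => ?_
    obtain ⟨h0, h1⟩ := hw01 r hr (uIoc_subset_uIcc ht)
    rw [norm_smul, Real.norm_of_nonneg h0]
    exact mul_le_of_le_one_left (norm_nonneg _) h1
  · exact Eventually.of_forall fun t ht => (hwc t (uIoc_subset_uIcc ht) r hr).smul_const (f t)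

variable [CompleteSpace E]

theorem integral_smul_eq_integral_setIntegral_lt {α : Type*} [MeasurableSpace α] {ν : Measure α}
    [SFinite ν] {w : α → ℝ} {g : α → E} {C : ℝ} (hw : AEMeasurable w ν)
    (hwC : ∀ᵐ a ∂ν, w a ∈ Icc 0 C) (hg : Integrable g ν) :
    ∫ a, w a • g a ∂ν = ∫ s in Ioc 0 C, ∫ a in {a | s < w a}, g a ∂ν := by
  let slice : α → ℝ → E := fun a s => (Iio (w a)).indicator (fun _ => g a) s
  have hslice : ∀ᵐ a ∂ν, ∫ s in Ioc 0 C, slice a s = w a • g a := by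
    filter_upwards [hwC] with a ha
    have hIoo : Ioc 0 C ∩ Iio (w a) = Ioo 0 (w a) :=
      ext fun s => ⟨fun h => ⟨h.1.1, h.2⟩, fun h => ⟨⟨h.1, h.2.le.trans ha.2⟩, h.2⟩⟩
    rw [setIntegral_indicator measurableSet_Iio, hIoo, setIntegral_const,
      Real.volume_real_Ioo_of_le ha.1, sub_zero]
  have hint : Integrable (Function.uncurry slice) (ν.prod (volume.restrict (Ioc 0 C))) :=
    (hg.comp_fst _).indicator₀ (nullMeasurableSet_lt measurable_snd.aemeasurable hw.comp_fst)
  calc ∫ a, w a • g a ∂ν = ∫ a, (∫ s in Ioc 0 C, slice a s) ∂ν :=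
        (integral_congr_ae hslice).symm
    _ = ∫ s in Ioc 0 C, ∫ a, slice a s ∂ν := integral_integral_swap hint
    _ = ∫ s in Ioc 0 C, ∫ a in {a | s < w a}, g a ∂ν :=
        integral_congr_ae (Eventually.of_forall fun s =>
          integral_indicator₀ (nullMeasurableSet_lt aemeasurable_const hw))

variable {μ : Measure ℝ} [NullSingletonClass μ] [SFinite μ] {f : ℝ → E}

theorem norm_integral_antitone_smul_le {w : ℝ → ℝ} {x y M : ℝ} (hxy : x ≤ y)
    (hw : AntitoneOn w (Icc x y)) (hwy : 0 ≤ w y) (hf : IntervalIntegrable f μ x y)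
    (hM : ∀ z ∈ Icc x y, ‖∫ t in x..z, f t ∂μ‖ ≤ M) :
    ‖∫ t in x..y, w t • f t ∂μ‖ ≤ w x * M := by
  have hx : x ∈ Icc x y := left_mem_Icc.2 hxy
  have hy : y ∈ Icc x y := right_mem_Icc.2 hxy
  have hwm : AEMeasurable w (μ.restrict (Ioc x y)) :=
    aemeasurable_restrict_of_antitoneOn measurableSet_Ioc (hw.mono Ioc_subset_Icc_self)
  have hwx : ∀ᵐ t ∂μ.restrict (Ioc x y), w t ∈ Icc 0 (w x) := by
    filter_upwards [ae_restrict_mem measurableSet_Ioc] with t ht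
    have ht' := Ioc_subset_Icc_self ht
    exact ⟨hwy.trans (hw ht' hy ht.2), hw hx ht' ht.1.le⟩
  have hsuperlevel : ∀ s : ℝ, ‖∫ t in {t | s < w t}, f t ∂μ.restrict (Ioc x y)‖ ≤ M := by
    intro s
    obtain ⟨z, hz, hae⟩ := exists_ae_eq_Ioc_of_forall_Ioc_subset (μ := μ)
      (s := {t | s < w t} ∩ Ioc x y) hxy inter_subset_right fun t ht u hu =>
        have hu' : u ∈ Ioc x y := ⟨hu.1, hu.2.trans ht.2.2⟩
        ⟨ht.1.trans_le (hw (Ioc_subset_Icc_self hu') (Ioc_subset_Icc_self ht.2) hu.2), hu'⟩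
    rw [Measure.restrict_restrict₀ (nullMeasurableSet_lt aemeasurable_const hwm),
      setIntegral_congr_set hae, ← intervalIntegral.integral_of_le hz.1]
    exact hM z hz
  rw [intervalIntegral.integral_of_le hxy,
    integral_smul_eq_integral_setIntegral_lt hwm hwx hf.1]
  calc ‖∫ s in Ioc 0 (w x), ∫ t in {t | s < w t}, f t ∂μ.restrict (Ioc x y)‖
      ≤ M * volume.real (Ioc 0 (w x)) :=
        norm_setIntegral_le_of_norm_le_const measure_Ioc_lt_top fun s _ => hsuperlevel s
    _ = w x * M := by
        rw [Real.volume_real_Ioc_of_le (hwy.trans (hw hx hy hxy)), sub_zero, mul_comm]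

variable {I : Set ℝ} [I.OrdConnected]

theorem eventually_forall_norm_integral_antitone_smul_le {l : Filter ℝ} [TendstoIxxClass Icc l l]
    (hf : LocallyIntegrableOn f I μ) (hI : I ∈ l)
    (hl : Tendsto (fun p : ℝ × ℝ => ∫ t in p.1..p.2, f t ∂μ) (l ×ˢ l) (𝓝 0))
    {ε : ℝ} (hε : 0 < ε) :
    ∀ᶠ p in l ×ˢ l, ∀ w : ℝ → ℝ, AntitoneOn w I → MapsTo w I (Icc 0 1) →
      ‖∫ t in p.1..p.2, w t • f t ∂μ‖ ≤ ε := by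
  obtain ⟨s, hs, hsε⟩ := mem_prod_same_iff.1 (hl.norm.eventually_le_const (by simpa using hε))
  have hsub : ∀ᶠ p : ℝ × ℝ in l ×ˢ l, uIcc p.1 p.2 ⊆ s ∩ I :=
    (tendsto_fst.uIcc tendsto_snd).eventually (eventually_smallSets_subset.2 (inter_mem hs hI))
  filter_upwards [hsub] with p hp w hw hw01
  have hordered : ∀ x y, x ≤ y → Icc x y ⊆ s ∩ I → ‖∫ t in x..y, w t • f t ∂μ‖ ≤ ε := by
    intro x y hxy hsI
    have hx := hsI (left_mem_Icc.2 hxy)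
    have hy := hsI (right_mem_Icc.2 hxy)
    exact (norm_integral_antitone_smul_le hxy (hw.mono (hsI.trans inter_subset_right))
      (hw01 hy.2).1 (intervalIntegrable_of_locallyIntegrableOn hf hx.2 hy.2)
      fun z hz => hsε (mk_mem_prod hx.1 (hsI hz).1)).trans
        (mul_le_of_le_one_left hε.le (hw01 hx.2).2)
  rcases le_total p.1 p.2 with h | h
  · exact hordered _ _ h (uIcc_of_le h ▸ hp)
  · rw [intervalIntegral.integral_symm, norm_neg]
    exact hordered _ _ h (uIcc_of_ge h ▸ hp)

variable {l₁ l₂ : Filter ℝ} [NeBot l₁] [NeBot l₂] [TendstoIxxClass Icc l₁ l₁]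
  [TendstoIxxClass Icc l₂ l₂] {c : E} {X : Type*} {w : X → ℝ → ℝ} {S : Set X}

theorem uniformCauchySeqOn_integral_antitone_smul (hf : LocallyIntegrableOn f I μ)
    (h₁ : I ∈ l₁) (h₂ : I ∈ l₂)
    (hc : Tendsto (fun p : ℝ × ℝ => ∫ t in p.1..p.2, f t ∂μ) (l₁ ×ˢ l₂) (𝓝 c))
    (hw : ∀ r ∈ S, AntitoneOn (w r) I) (hw01 : ∀ r ∈ S, MapsTo (w r) I (Icc 0 1)) :
    UniformCauchySeqOn (fun (p : ℝ × ℝ) r => ∫ t in p.1..p.2, w r t • f t ∂μ)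
      (l₁ ×ˢ l₂) S := by
  intro u hu
  obtain ⟨ε, hε, hεu⟩ := Metric.mem_uniformity_dist.1 hu
  have htail₁ := eventually_forall_norm_integral_antitone_smul_le hf h₁
    (tendsto_integral_prod_self_of_tendsto hf h₁ h₂ hc) (ε := ε / 3) (by positivity)
  have htail₂ := eventually_forall_norm_integral_antitone_smul_le hf h₂
    (tendsto_integral_prod_self_of_tendsto hf h₂ h₁ (tendsto_integral_swap hc))
    (ε := ε / 3) (by positivity)
  have hI : I ×ˢ I ∈ l₁ ×ˢ l₂ := prod_mem_prod h₁ h₂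
  filter_upwards [prod_mem_prod hI hI, (tendsto_fst.prodMap tendsto_fst).eventually htail₁,
    (tendsto_snd.prodMap tendsto_snd).eventually htail₂]
    with ⟨⟨x, y⟩, ⟨x', y'⟩⟩ ⟨⟨hx, hy⟩, ⟨hx', hy'⟩⟩ hxx' hyy' r hr
  have hint : ∀ a ∈ I, ∀ b ∈ I, IntervalIntegrable (fun t => w r t • f t) μ a b :=
    fun a ha b hb => intervalIntegrable_antitone_smul
      ((hw r hr).mono (OrdConnected.uIcc_subset ‹_› ha hb))
      (intervalIntegrable_of_locallyIntegrableOn hf ha hb)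
  apply hεu
  calc dist (∫ t in x..y, w r t • f t ∂μ) (∫ t in x'..y', w r t • f t ∂μ)
      = ‖(∫ t in x..x', w r t • f t ∂μ) - ∫ t in y..y', w r t • f t ∂μ‖ := by
        rw [dist_eq_norm, intervalIntegral.integral_interval_sub_interval_comm
          (hint x hx y hy) (hint x' hx' y' hy') (hint x hx x' hx')]
    _ ≤ ε / 3 + ε / 3 :=
        norm_sub_le_of_le (hxx' _ (hw r hr) (hw01 r hr)) (hyy' _ (hw r hr) (hw01 r hr))
    _ < ε := by linarith

theorem exists_tendstoUniformlyOn_integral_antitone_smul [TopologicalSpace X]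
    [FirstCountableTopology X] (hf : LocallyIntegrableOn f I μ) (h₁ : I ∈ l₁) (h₂ : I ∈ l₂)
    (hc : Tendsto (fun p : ℝ × ℝ => ∫ t in p.1..p.2, f t ∂μ) (l₁ ×ˢ l₂) (𝓝 c))
    (hw : ∀ r ∈ S, AntitoneOn (w r) I) (hw01 : ∀ r ∈ S, MapsTo (w r) I (Icc 0 1))
    (hwc : ∀ t ∈ I, ContinuousOn (fun r => w r t) S) :
    ∃ F : X → E, TendstoUniformlyOn (fun (p : ℝ × ℝ) r => ∫ t in p.1..p.2, w r t • f t ∂μ)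
      F (l₁ ×ˢ l₂) S ∧ ContinuousOn F S := by
  have hcauchy := uniformCauchySeqOn_integral_antitone_smul hf h₁ h₂ hc hw hw01
  have hlim : ∀ r ∈ S, ∃ L,
      Tendsto (fun p : ℝ × ℝ => ∫ t in p.1..p.2, w r t • f t ∂μ) (l₁ ×ˢ l₂) (𝓝 L) :=
    fun r hr => cauchy_map_iff_exists_tendsto.1 (hcauchy.cauchy_map hr)
  choose! F hF using hlim
  have hunif := hcauchy.tendstoUniformlyOn_of_tendsto hF
  refine ⟨F, hunif, hunif.continuousOn (Eventually.frequently ?_)⟩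
  filter_upwards [prod_mem_prod h₁ h₂] with p ⟨hx, hy⟩
  have hsub : uIcc p.1 p.2 ⊆ I := OrdConnected.uIcc_subset ‹_› hx hy
  exact continuousOn_integral_antitone_smul (intervalIntegrable_of_locallyIntegrableOn hf hx hy)
    (fun r hr => (hw r hr).mono hsub) (fun r hr => (hw01 r hr).mono_left hsub)
    fun t ht => hwc t (hsub ht)

theorem laplace_transform_continuity_general (hf : LocallyIntegrableOn f (Ioi 0) μ)
    (hc : Tendsto (fun p : ℝ × ℝ => ∫ t in p.1..p.2, f t ∂μ) (𝓝[>] 0 ×ˢ atTop) (𝓝 c)) :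
    ∃ F : ℝ → E,
      (∀ r : ℝ, 0 < r →
        Tendsto (fun p : ℝ × ℝ => ∫ t in p.1..p.2, Real.exp (-r * t) • f t ∂μ)
          (𝓝[>] 0 ×ˢ atTop) (𝓝 (F r))) ∧
      ContinuousOn F (Ioi 0) ∧
      Tendsto F (𝓝[>] 0) (𝓝 c) := by
  have hanti : ∀ r ∈ Ici (0 : ℝ), AntitoneOn (fun t => Real.exp (-r * t)) (Ioi 0) :=
    fun r hr s _ t _ hst => Real.exp_le_exp.2 (mul_le_mul_of_nonpos_left hst (neg_nonpos.2 hr))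
  have hunit : ∀ r ∈ Ici (0 : ℝ), MapsTo (fun t => Real.exp (-r * t)) (Ioi 0) (Icc 0 1) :=
    fun r hr t ht => ⟨(Real.exp_pos _).le,
      Real.exp_le_one_iff.2 (mul_nonpos_of_nonpos_of_nonneg (neg_nonpos.2 hr) (le_of_lt ht))⟩
  obtain ⟨F, hunif, hcont⟩ := exists_tendstoUniformlyOn_integral_antitone_smul hf
    self_mem_nhdsWithin (Ioi_mem_atTop 0) hc hanti hunit fun t _ => by fun_prop
  have hF0 : F 0 = c :=
    tendsto_nhds_unique (hunif.tendsto_at self_mem_Ici) (by simpa using hc)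
  refine ⟨F, fun r hr => hunif.tendsto_at (le_of_lt hr), hcont.mono Ioi_subset_Ici_self, ?_⟩
  rw [← hF0]
  exact (hcont 0 self_mem_Ici).mono_left (nhdsWithin_mono _ Ioi_subset_Ici_self)

end AbelTest

/-- Abelian continuity of the Laplace transform: let `0 < a < b`, let `f` be measurable,
integrable on every `[x,y] ⊂ (0,∞)`, continuous on `(0,a]` and on `[b,∞)`, and suppose the
improper integral `∫_0^∞ f t dt` converges with value `c`.  Then for every `r > 0` the
improper integral `F r = ∫_0^∞ e^{−r t} f t dt` converges, `F` is continuous on `(0,∞)`,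
and `F r → c` as `r → 0+`. -/
theorem laplace_transform_continuity (a b : ℝ) (ha : 0 < a) (hab : a < b)
    (f : ℝ → ℝ) (hmeas : Measurable f)
    (hint : ∀ x y : ℝ, 0 < x → x ≤ y → IntegrableOn f (Set.Icc x y))
    (hca : ContinuousOn f (Set.Ioc 0 a)) (hcb : ContinuousOn f (Set.Ici b))
    (c : ℝ)
    (hconv : Tendsto (fun p : ℝ × ℝ => ∫ t in p.1..p.2, f t)
      ((𝓝[>] (0 : ℝ)) ×ˢ atTop) (𝓝 c)) :
    ∃ F : ℝ → ℝ,
      (∀ r : ℝ, 0 < r →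
        Tendsto (fun p : ℝ × ℝ => ∫ t in p.1..p.2, Real.exp (-r * t) * f t)
          ((𝓝[>] (0 : ℝ)) ×ˢ atTop) (𝓝 (F r))) ∧
      ContinuousOn F (Set.Ioi 0) ∧
      Tendsto F (𝓝[>] (0 : ℝ)) (𝓝 c) := by
  have hloc := locallyIntegrableOn_Ioi_of_integrableOn_Icc hint
  exact laplace_transform_continuity_general hloc hconv
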